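/- arXiv:2411.13892 — 2 statements merged into one kernel-verified Lean document; each statement's English description precedes it below -/
import Mathlib

section
/- Let L be a real symmetric positive semidefinite n×n matrix with an orthonormal eigenbasis u₁, …, u_n of ℝⁿ and eigenvalues λ₁ = 0 ≤ λ₂ ≤ … ≤ λ_n, where the 0-eigenvector is u₁ = (√d₁, …, √d_n)/√(Σᵢ dᵢ) for positive reals d₁, …, d_n. Let μ > 0, let X⁰ be a real n×d matrix, set cₖ := X⁰ᵀ uₖ ∈ ℝᵈ, and assume the vectors c₁, …, c_n are pairwise orthogonal in ℝᵈ. Then the minimizer X* = μ(L + μI)⁻¹ X⁰ satisfies, for every row index v, ‖row_v(X*)‖² ≥ d_v · C, where C := ‖c₁‖² / (Σᵢ dᵢ); in particular the squared norm of each node's embedding in the minimizer is lower bounded by a constant multiple of its degree d_v. -/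
open Matrix

/-- Norm concentration: for a symmetric PSD matrix `L` with orthonormal eigenbasis
`u₀, …, u_{n-1}` and sorted eigenvalues `λ₀ = 0 ≤ … ≤ λ_{n-1}`, whose 0-eigenvector is
`u₀ = (√d₁, …, √d_n)/√(Σᵢ dᵢ)` for positive `dᵢ`, if the vectors `cₖ = X⁰ᵀ uₖ` are
pairwise orthogonal then every row `v` of the minimizer `X* = μ (L + μI)⁻¹ X⁰`
satisfies `‖row_v(X*)‖² ≥ d_v · C` with `C = ‖c₀‖² / (Σᵢ dᵢ)`. -/
theorem stmt7 (n d : ℕ) [NeZero n] (L : Matrix (Fin n) (Fin n) ℝ) (hL : L.PosSemidef)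
    (u : Fin n → (Fin n → ℝ)) (lam : Fin n → ℝ)
    (h_ortho : ∀ i j : Fin n, u i ⬝ᵥ u j = if i = j then (1 : ℝ) else 0)
    (h_eig : ∀ k : Fin n, L.mulVec (u k) = lam k • u k)
    (h_mono : Monotone lam) (h_lam0 : lam 0 = 0)
    (deg : Fin n → ℝ) (hpos : ∀ i, 0 < deg i)
    (h_u0 : u 0 = fun i => Real.sqrt (deg i) / Real.sqrt (∑ i, deg i))
    (μ : ℝ) (hμ : 0 < μ) (X0 : Matrix (Fin n) (Fin d) ℝ)
    (h_c_ortho : ∀ k l : Fin n, k ≠ l → X0ᵀ.mulVec (u k) ⬝ᵥ X0ᵀ.mulVec (u l) = 0) :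
    ∀ v : Fin n,
      deg v * ((∑ l : Fin d, (X0ᵀ.mulVec (u 0)) l ^ 2) / ∑ i, deg i) ≤
        ∑ l : Fin d, ((μ • (L + μ • 1)⁻¹ * X0) v l) ^ 2 := by
  intro v
  have hlam : ∀ k, 0 < lam k + μ := by
    intro k
    have := h_mono (show (0 : Fin n) ≤ k by rw [Fin.le_def]; simp)
    rw [h_lam0] at this
    linarith
  set U : Matrix (Fin n) (Fin n) ℝ := Matrix.of (fun i k => u k i) with hU
  have hUtU : Uᵀ * U = 1 := by
    ext i j
    rw [Matrix.one_apply, ← h_ortho i j]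
    rfl
  have hUUt : U * Uᵀ = 1 := mul_eq_one_comm.mp hUtU
  have hLU : (L + μ • 1) * U = U * Matrix.diagonal (fun k => lam k + μ) := by
    ext i k
    have h1 : (L * U) i k = lam k * u k i := congrFun (h_eig k) i
    rw [Matrix.add_mul, Matrix.add_apply, h1, Matrix.mul_diagonal, Matrix.smul_mul,
      Matrix.one_mul, Matrix.smul_apply, hU, Matrix.of_apply, smul_eq_mul]
    ring
  have hinv : (L + μ • 1)⁻¹ = U * Matrix.diagonal (fun k => (lam k + μ)⁻¹) * Uᵀ := by
    apply Matrix.inv_eq_right_inv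
    rw [← Matrix.mul_assoc, ← Matrix.mul_assoc, hLU, Matrix.mul_assoc U,
      Matrix.diagonal_mul_diagonal]
    have : (fun k => (lam k + μ) * (lam k + μ)⁻¹) = fun _ => (1 : ℝ) := by
      funext k
      exact mul_inv_cancel₀ (hlam k).ne'
    rw [this, Matrix.diagonal_one, Matrix.mul_one, hUUt]
  set c : Fin n → Fin d → ℝ := fun k => X0ᵀ.mulVec (u k) with hc
  have hY : ∀ l, (μ • (L + μ • 1)⁻¹ * X0) v l
      = ∑ k, (μ * (lam k + μ)⁻¹ * u k v) * c k l := by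
    intro l
    have hcl : ∀ k, (Uᵀ * X0) k l = c k l := by
      intro k
      simp only [Matrix.mul_apply, hc, Matrix.mulVec, dotProduct, Matrix.transpose_apply, hU,
        Matrix.of_apply]
      exact Finset.sum_congr rfl fun _ _ => mul_comm _ _
    rw [hinv, Matrix.smul_mul, Matrix.mul_assoc, Matrix.smul_apply, Matrix.mul_apply,
      smul_eq_mul, Finset.mul_sum]
    refine Finset.sum_congr rfl fun k _ => ?_
    rw [hcl, Matrix.mul_diagonal, hU, Matrix.of_apply]
    ring
  have hsum : ∑ l, ((μ • (L + μ • 1)⁻¹ * X0) v l) ^ 2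
      = ∑ k, (μ * (lam k + μ)⁻¹ * u k v) ^ 2 * ∑ l, c k l ^ 2 := by
    simp_rw [hY]
    simp_rw [sq (∑ k, _), Finset.sum_mul_sum]
    rw [Finset.sum_comm]
    refine Finset.sum_congr rfl fun k _ => ?_
    rw [Finset.sum_comm, Finset.sum_eq_single k]
    · rw [Finset.mul_sum]
      exact Finset.sum_congr rfl fun l _ => by ring
    · intro j _ hj
      have h0 : ∑ l, c k l * c j l = 0 := h_c_ortho k j hj.symm
      rw [← mul_zero ((μ * (lam k + μ)⁻¹ * u k v) * (μ * (lam j + μ)⁻¹ * u j v)), ← h0,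
        Finset.mul_sum]
      exact Finset.sum_congr rfl fun l _ => by ring
    · simp
  rw [hsum]
  have hS : 0 ≤ ∑ i, deg i := Finset.sum_nonneg fun i _ => (hpos i).le
  refine le_trans (le_of_eq ?_) (Finset.single_le_sum
    (f := fun k => (μ * (lam k + μ)⁻¹ * u k v) ^ 2 * ∑ l, c k l ^ 2)
    (fun k _ => mul_nonneg (sq_nonneg _) (Finset.sum_nonneg fun l _ => sq_nonneg _))
    (Finset.mem_univ 0))
  have hu : (u 0 v) ^ 2 = deg v / ∑ i, deg i := by
    rw [h_u0, div_pow, Real.sq_sqrt (hpos v).le, Real.sq_sqrt hS]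
  show _ = (μ * (lam 0 + μ)⁻¹ * u 0 v) ^ 2 * ∑ l, c 0 l ^ 2
  rw [h_lam0, zero_add, mul_inv_cancel₀ hμ.ne', one_mul, hu]
  ring
end

section
/- Let G be a finite simple undirected graph on vertex set V, let d_j denote the degree of vertex j, and let x : V → ℝᵈ assign an embedding to each vertex. Fix a vertex v with d_v > 0 whose neighbors all have positive degree, and define the one-layer message-passing update Δx_v := (Σ_{j ∈ N(v)} x_j / √(d_v d_j)) − x_v, where N(v) is the set of neighbors of v. Then ‖Δx_v‖² ≤ Σ_{j ∈ N(v)} ‖x_j/√d_j − x_v/√d_v‖²; that is, the squared norm of the embedding update of node v under one step of symmetrically normalized message passing is upper bounded by the (unhalved) local Dirichlet energy of v. -/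
open Matrix

/-- One layer of symmetrically normalized message passing: the squared norm of the
update `Δx_v = (Σ_{j ∈ N(v)} x_j/√(d_v d_j)) − x_v` is upper bounded by the unhalved
local Dirichlet energy `Σ_{j ∈ N(v)} ‖x_j/√d_j − x_v/√d_v‖²`. -/
theorem stmt8 (V : Type*) [Fintype V] [DecidableEq V] (G : SimpleGraph V)
    [DecidableRel G.Adj] (d : ℕ) (x : V → EuclideanSpace ℝ (Fin d)) (v : V)
    (hv : 0 < G.degree v) (hnb : ∀ j ∈ G.neighborFinset v, 0 < G.degree j) :
    ‖(∑ j ∈ G.neighborFinset v,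
        (Real.sqrt ((G.degree v : ℝ) * (G.degree j : ℝ)))⁻¹ • x j) - x v‖ ^ 2 ≤
      ∑ j ∈ G.neighborFinset v,
        ‖(Real.sqrt (G.degree j : ℝ))⁻¹ • x j -
          (Real.sqrt (G.degree v : ℝ))⁻¹ • x v‖ ^ 2 := by
  have hd : (0 : ℝ) < (G.degree v : ℝ) := by exact_mod_cast hv
  have hs : 0 < Real.sqrt (G.degree v : ℝ) := Real.sqrt_pos.mpr hd
  have hss : Real.sqrt (G.degree v : ℝ) ^ 2 = (G.degree v : ℝ) := Real.sq_sqrt hd.le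
  have key : (∑ j ∈ G.neighborFinset v,
        (Real.sqrt ((G.degree v : ℝ) * (G.degree j : ℝ)))⁻¹ • x j) - x v =
      (Real.sqrt (G.degree v : ℝ))⁻¹ • ∑ j ∈ G.neighborFinset v,
        ((Real.sqrt (G.degree j : ℝ))⁻¹ • x j - (Real.sqrt (G.degree v : ℝ))⁻¹ • x v) := by
    rw [Finset.sum_sub_distrib, smul_sub, Finset.smul_sum, Finset.sum_const,
      SimpleGraph.card_neighborFinset_eq_degree]
    congr 1
    · refine Finset.sum_congr rfl fun j _ => ?_
      rw [Real.sqrt_mul hd.le, mul_inv, smul_smul]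
    · rw [← Nat.cast_smul_eq_nsmul ℝ, smul_smul, smul_smul]
      have : (Real.sqrt (G.degree v : ℝ))⁻¹ *
          ((G.degree v : ℝ) * (Real.sqrt (G.degree v : ℝ))⁻¹) = 1 := by
        nth_rewrite 2 [← hss]
        field_simp
      rw [← mul_assoc] at this
      simp only [← mul_assoc, this, one_smul]
  rw [key, norm_smul, mul_pow, Real.norm_eq_abs, sq_abs, inv_pow, hss,
    inv_mul_le_iff₀ hd]
  refine le_trans (pow_le_pow_left₀ (norm_nonneg _) (norm_sum_le _ _) 2) ?_
  have h := sq_sum_le_card_mul_sum_sq (s := G.neighborFinset v)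
    (f := fun j => ‖(Real.sqrt (G.degree j : ℝ))⁻¹ • x j -
          (Real.sqrt (G.degree v : ℝ))⁻¹ • x v‖)
  rwa [SimpleGraph.card_neighborFinset_eq_degree] at h
end
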